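/- arXiv:2112.10739 — 5 statements merged into one kernel-verified Lean document; each statement's English description precedes it below -/
import Mathlib

section
/- Let α be an irrational real number. If β is a populated multi-index whose homogeneity |β| = α(1+[β]) + |β|_p is an integer (in particular, if |β| ∈ ℕ), then β is purely polynomial, i.e. β = e_n for some n ∈ ℕ² \ {(0,0)}. -/
open Finsupp

noncomputable section

/-- The index set `I`: symbols `z_k` for `k : ℕ` (left summand) and `z_n` for
`n ∈ ℕ² \ {(0,0)}` (right summand). -/
abbrev RSIdx : Type := ℕ ⊕ {n : ℕ × ℕ // n ≠ (0, 0)}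

/-- Multi-indices: finitely supported functions from the index set to `ℕ`. -/
abbrev MIdx : Type := RSIdx →₀ ℕ

/-- The unit multi-index `e_k`. -/
def eK (k : ℕ) : MIdx := Finsupp.single (Sum.inl k) 1

/-- The unit multi-index `e_n` for `n ≠ (0,0)`. -/
def eN (n : {n : ℕ × ℕ // n ≠ (0, 0)}) : MIdx := Finsupp.single (Sum.inr n) 1

/-- The scaled length `[β] = Σ_k k·β(k) − Σ_{n≠(0,0)} β(n)`. -/
def slen (β : MIdx) : ℤ :=
  β.sum fun i m =>
    match i with
    | Sum.inl k => (k : ℤ) * (m : ℤ)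
    | Sum.inr _ => -(m : ℤ)

/-- The parabolic length `|n| = n₁ + 2 n₂` of `n ∈ ℕ²`. -/
def plen (n : ℕ × ℕ) : ℕ := n.1 + 2 * n.2

/-- The polynomial part `|β|_p = Σ_{n≠(0,0)} |n|·β(n)`. -/
def polyPart (β : MIdx) : ℕ :=
  β.sum fun i m =>
    match i with
    | Sum.inl _ => 0
    | Sum.inr n => plen n.val * m

/-- The homogeneity `|β| = α(1+[β]) + |β|_p`. -/
def homog (α : ℝ) (β : MIdx) : ℝ := α * (1 + (slen β : ℝ)) + (polyPart β : ℝ)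

/-- `β` is purely polynomial iff `β = e_n` for some `n ≠ (0,0)`. -/
def PurelyPoly (β : MIdx) : Prop := ∃ n, β = eN n

/-- `β` is populated iff it is purely polynomial or `[β] ≥ 0`. -/
def Populated (β : MIdx) : Prop := PurelyPoly β ∨ 0 ≤ slen β

/-- The ordinal `|β|_≺ = [β] + (1/2)|β|_p + (1/4)β(0)`. -/
def precNorm (β : MIdx) : ℝ :=
  (slen β : ℝ) + (polyPart β : ℝ) / 2 + (β (Sum.inl 0) : ℝ) / 4

theorem irrational_homog_iff {α : ℝ} (hα : Irrational α) (β : MIdx) :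
    Irrational (homog α β) ↔ slen β ≠ -1 := by
  have homog_eq : homog α β = α * ((1 + slen β : ℤ) : ℝ) + (polyPart β : ℝ) := by
    simp only [homog, Int.cast_add, Int.cast_one]
  have one_add_slen_ne_zero : 1 + slen β ≠ 0 ↔ slen β ≠ -1 := by lia
  rw [homog_eq, irrational_add_natCast_iff, irrational_mul_intCast_iff,
    and_iff_left hα, one_add_slen_ne_zero]

theorem Populated.purelyPoly_of_slen_neg {β : MIdx} (hβ : Populated β) (hneg : slen β < 0) :
    PurelyPoly β :=
  hβ.resolve_right hneg.not_ge

theorem statement0_general {α : ℝ} (hα : Irrational α) {β : MIdx} (hβ : Populated β)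
    (hrat : ¬ Irrational (homog α β)) : PurelyPoly β := by
  have slen_eq : slen β = -1 := by rwa [irrational_homog_iff hα, not_not] at hrat
  exact hβ.purelyPoly_of_slen_neg (by lia)

/-- If `α` is irrational and `β` is a populated multi-index whose homogeneity
`|β| = α(1+[β]) + |β|_p` is an integer, then `β` is purely polynomial. -/
theorem statement0 (α : ℝ) (hα : Irrational α) (β : MIdx) (hβ : Populated β)
    (hint : ∃ m : ℤ, homog α β = (m : ℝ)) : PurelyPoly β := by
  obtain ⟨m, hm⟩ := hint
  exact statement0_general hα hβ (hm ▸ m.not_irrational)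
end
end

section
/- Let α > 0. The set A := { |β| : β a populated multi-index } of homogeneities is locally finite: for every real number M, the set A ∩ (−∞, M] is finite. -/
open Finsupp

noncomputable section

/-!
A populated multi-index has `[β] ≥ -1`, so its homogeneity lies in the additive monoid `ℕ α + ℕ`.
An additive monoid generated by finitely many positive reals is locally finite: by the Archimedean
property, the multiplicity of each generator in an element `≤ M` is bounded in terms of `M`.
-/

section LocallyFinite

variable {G : Type*} [AddCommMonoid G] [PartialOrder G] [IsOrderedCancelAddMonoid G] [Archimedean G]

theorem finite_setOf_sum_nsmul_le {ι : Type*} [Fintype ι] {g : ι → G} (hg : ∀ i, 0 < g i) (c : G) :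
    {n : ι → ℕ | ∑ i, n i • g i ≤ c}.Finite := by
  choose N hN using fun i ↦ Archimedean.arch c (hg i)
  refine (Set.Finite.pi' fun i ↦ Set.finite_Iic (N i)).subset fun n hn i ↦ ?_
  refine (nsmul_left_strictMono (hg i)).le_iff_le.1 ?_
  calc
    n i • g i ≤ ∑ j, n j • g j :=
      Finset.single_le_sum (fun j _ ↦ nsmul_nonneg (hg j).le (n j)) (Finset.mem_univ i)
    _ ≤ c := hn
    _ ≤ N i • g i := hN i

theorem finite_addSubmonoidClosure_inter_Iic {s : Set G} (hs : s.Finite) (hpos : ∀ g ∈ s, 0 < g)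
    (c : G) : ((AddSubmonoid.closure s : Set G) ∩ Set.Iic c).Finite := by
  have := hs.fintype
  refine ((finite_setOf_sum_nsmul_le (fun g : s ↦ hpos g g.2) c).image
    fun n ↦ ∑ g : s, n g • (g : G)).subset ?_
  rintro x ⟨hx, hxc⟩
  obtain ⟨n, rfl⟩ := AddSubmonoid.mem_closure_iff_of_fintype.1 hx
  exact ⟨n, hxc, rfl⟩

end LocallyFinite

theorem slen_eN (n : {n : ℕ × ℕ // n ≠ (0, 0)}) : slen (eN n) = -1 := by
  simp [slen, eN]

theorem Populated.neg_one_le_slen {β : MIdx} (hβ : Populated β) : -1 ≤ slen β := by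
  obtain ⟨n, rfl⟩ | hβ := hβ
  · exact (slen_eN n).ge
  · lia

theorem homog_mem_addSubmonoidClosure (α : ℝ) {β : MIdx} (hβ : -1 ≤ slen β) :
    homog α β ∈ AddSubmonoid.closure {α, 1} := by
  obtain ⟨k, hk⟩ : ∃ k : ℕ, 1 + slen β = k := Int.eq_ofNat_of_zero_le (by lia)
  have hk' : 1 + (slen β : ℝ) = k := mod_cast hk
  refine (AddSubmonoid.mem_closure_pair ..).2 ⟨k, polyPart β, ?_⟩
  rw [homog, hk', nsmul_eq_mul, nsmul_one, mul_comm]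

/-- For `α > 0`, the set `A` of homogeneities of populated multi-indices is locally
finite: its intersection with `(−∞, M]` is finite for every `M`. -/
theorem statement2 (α : ℝ) (hα : 0 < α) (M : ℝ) :
    {x : ℝ | (∃ β : MIdx, Populated β ∧ homog α β = x) ∧ x ≤ M}.Finite := by
  have hpos : ∀ g ∈ ({α, 1} : Set ℝ), 0 < g := by simp [hα]
  refine (finite_addSubmonoidClosure_inter_Iic (Set.toFinite {α, 1}) hpos M).subset ?_
  rintro _ ⟨⟨β, hβ, rfl⟩, hM⟩
  exact ⟨homog_mem_addSubmonoidClosure α hβ.neg_one_le_slen, hM⟩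
end
end

section
/- Let k ∈ ℕ and let γ₁, …, γ_{k+1} be populated multi-indices, and set β := e_k + γ₁ + ⋯ + γ_{k+1}. Then the following are equivalent: (i) β is populated; (ii) [β] ≥ 0; (iii) not all of γ₁, …, γ_{k+1} are purely polynomial. -/
open Finsupp

noncomputable section

/-! Distributing the `k` coming from `e_k` over the `k + 1` summands gives
`[e_k + γ₁ + ⋯ + γ_{k+1}] = ∑ i, ([γᵢ] + 1) - 1`. For populated `γᵢ` each term `[γᵢ] + 1` is a
nonnegative integer which vanishes exactly when `γᵢ` is purely polynomial. -/

theorem slen_add (β γ : MIdx) : slen (β + γ) = slen β + slen γ := by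
  refine Finsupp.sum_add_index' ?_ ?_
  · rintro (k | n) <;> simp
  · rintro (k | n) m₁ m₂ <;> push_cast <;> ring

theorem slen_sum {ι : Type*} (s : Finset ι) (γ : ι → MIdx) :
    slen (∑ i ∈ s, γ i) = ∑ i ∈ s, slen (γ i) :=
  map_sum (AddMonoidHom.mk' slen slen_add) γ s

theorem slen_eK (k : ℕ) : slen (eK k) = k := by
  simp [slen, eK]

theorem PurelyPoly.slen_eq_neg_one {γ : MIdx} (hγ : PurelyPoly γ) : slen γ = -1 := by
  obtain ⟨n, rfl⟩ := hγ
  simp [slen, eN]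

theorem Populated.slen_add_one_nonneg {γ : MIdx} (hγ : Populated γ) : 0 ≤ slen γ + 1 := by
  rcases hγ with hpoly | hslen
  · simp [hpoly.slen_eq_neg_one]
  · lia

theorem Populated.slen_add_one_eq_zero_iff {γ : MIdx} (hγ : Populated γ) :
    slen γ + 1 = 0 ↔ PurelyPoly γ := by
  refine ⟨fun hslen => hγ.resolve_right (by lia), fun hpoly => ?_⟩
  simp [hpoly.slen_eq_neg_one]

theorem not_purelyPoly_eK_add (k : ℕ) (γ : MIdx) : ¬ PurelyPoly (eK k + γ) := by
  rintro ⟨n, h⟩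
  have hk : (eK k + γ) (Sum.inl k) = eN n (Sum.inl k) := by rw [h]
  simp [eK, eN] at hk

theorem populated_eK_add_iff (k : ℕ) (γ : MIdx) :
    Populated (eK k + γ) ↔ 0 ≤ slen (eK k + γ) :=
  or_iff_right (not_purelyPoly_eK_add k γ)

theorem slen_eK_add_sum {ι : Type*} {k : ℕ} {s : Finset ι} (hs : s.card = k + 1)
    (γ : ι → MIdx) :
    slen (eK k + ∑ i ∈ s, γ i) = ∑ i ∈ s, (slen (γ i) + 1) - 1 := by
  rw [slen_add, slen_eK, slen_sum, Finset.sum_add_distrib, Finset.sum_const, hs, nsmul_one]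
  push_cast
  ring

theorem slen_eK_add_sum_nonneg_iff {ι : Type*} {k : ℕ} {s : Finset ι} (hs : s.card = k + 1)
    {γ : ι → MIdx} (hγ : ∀ i ∈ s, Populated (γ i)) :
    0 ≤ slen (eK k + ∑ i ∈ s, γ i) ↔ ¬ ∀ i ∈ s, PurelyPoly (γ i) := by
  have hnonneg : ∀ i ∈ s, 0 ≤ slen (γ i) + 1 := fun i hi => (hγ i hi).slen_add_one_nonneg
  calc 0 ≤ slen (eK k + ∑ i ∈ s, γ i)
    _ ↔ 0 < ∑ i ∈ s, (slen (γ i) + 1) := by rw [slen_eK_add_sum hs]; lia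
    _ ↔ ∑ i ∈ s, (slen (γ i) + 1) ≠ 0 := (Finset.sum_nonneg hnonneg).lt_iff_ne'
    _ ↔ ¬ ∀ i ∈ s, slen (γ i) + 1 = 0 := (Finset.sum_eq_zero_iff_of_nonneg hnonneg).not
    _ ↔ ¬ ∀ i ∈ s, PurelyPoly (γ i) :=
      (forall₂_congr fun i hi => (hγ i hi).slen_add_one_eq_zero_iff).not

/-- Let `γ₁, …, γ_{k+1}` be populated and `β = e_k + γ₁ + ⋯ + γ_{k+1}`.
Then: `β` populated ↔ `[β] ≥ 0` ↔ not all of the `γᵢ` are purely polynomial. -/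
theorem statement9 (k : ℕ) (γs : Fin (k + 1) → MIdx)
    (hγ : ∀ i, Populated (γs i)) :
    (Populated (eK k + ∑ i, γs i) ↔ 0 ≤ slen (eK k + ∑ i, γs i))
    ∧ (0 ≤ slen (eK k + ∑ i, γs i) ↔ ¬ ∀ i, PurelyPoly (γs i)) := by
  refine ⟨populated_eK_add_iff k _, ?_⟩
  simpa only [Finset.mem_univ, true_imp_iff] using
    slen_eK_add_sum_nonneg_iff (Finset.card_fin (k + 1)) fun i _ => hγ i
end
end

section
/- (Lemma 5.1, triangular dependencies.) Let 0 < α ≤ 1 and k ≥ 1. Let β₁, …, β_{k+1} be populated multi-indices, let γ be a populated multi-index that is NOT purely polynomial, and let n₁, …, n_k ∈ ℕ² satisfy |n_i| < |β_i| for i = 1, …, k. Set β := β₁ + ⋯ + β_{k+1}. If the composition matrix entry (D^{(n₁)} ⋯ D^{(n_k)})_{β_{k+1}}^γ ≠ 0, then β_i ≺ β for every i = 1, …, k. -/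
open Finsupp

noncomputable section

open Classical in
/-- The matrix entry `(D^(0))_β^γ` of the derivation
`D^(0) = Σ_k (k+1) z_{k+1} ∂_{z_k}`: it is `(k+1)·γ(k)` if there exists `k` with
`γ + e_{k+1} = β + e_k` (such `k` is unique), and `0` otherwise. -/
def D0 (β γ : MIdx) : ℕ :=
  if h : ∃ k : ℕ, γ + eK (k + 1) = β + eK k then
    (h.choose + 1) * γ (Sum.inl h.choose)
  else 0

open Classical in
/-- The matrix entry of `D^(n)` for `n ∈ ℕ²`, where `D^((0,0))` means `D^(0)` and,
for `n ≠ (0,0)`, `(D^(n))_β^γ = β(n) + 1` if `γ = β + e_n`, and `0` otherwise. -/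
def DMat (n : ℕ × ℕ) : MIdx → MIdx → ℕ :=
  if hn : n = (0, 0) then D0
  else fun β γ =>
    if γ = β + eN ⟨n, hn⟩ then β (Sum.inr ⟨n, hn⟩) + 1 else 0

/-- Composition of two `ℕ`-valued matrices indexed by multi-indices; the sum over the
intermediate multi-index is well-defined (by row-finiteness) as a `finsum`. -/
def matMul (A B : MIdx → MIdx → ℕ) : MIdx → MIdx → ℕ :=
  fun β γ => ∑ᶠ δ : MIdx, A β δ * B δ γ

open Classical in
/-- The identity matrix. -/
def matId : MIdx → MIdx → ℕ := fun β γ => if γ = β then 1 else 0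

/-- Composition of a list of matrices. -/
def matProd : List (MIdx → MIdx → ℕ) → MIdx → MIdx → ℕ
  | [] => matId
  | A :: l => matMul A (matProd l)

/-- The `l`-fold matrix power of `D^(0)`. -/
def D0pow : ℕ → MIdx → MIdx → ℕ
  | 0 => matId
  | l + 1 => matMul D0 (D0pow l)

theorem polyPart_add (β γ : MIdx) : polyPart (β + γ) = polyPart β + polyPart γ := by
  refine Finsupp.sum_add_index' ?_ ?_
  · rintro (_ | n) <;> simp
  · rintro (_ | n) a b <;> ring

theorem polyPart_eN (n : {n : ℕ × ℕ // n ≠ (0, 0)}) : polyPart (eN n) = plen n := by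
  rw [polyPart, eN, Finsupp.sum_single_index] <;> simp

theorem plen_pos {n : ℕ × ℕ} (hn : n ≠ (0, 0)) : 0 < plen n := by
  rw [ne_eq, Prod.ext_iff] at hn
  simp only [plen] at hn ⊢
  omega

theorem precNorm_add (β γ : MIdx) : precNorm (β + γ) = precNorm β + precNorm γ := by
  rw [precNorm, slen_add, polyPart_add, Finsupp.add_apply, precNorm, precNorm]
  push_cast
  ring

theorem precNorm_sum {ι : Type*} (s : Finset ι) (f : ι → MIdx) :
    precNorm (∑ j ∈ s, f j) = ∑ j ∈ s, precNorm (f j) :=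
  map_sum (AddMonoidHom.mk' precNorm precNorm_add) f s

theorem precNorm_eN (n : {n : ℕ × ℕ // n ≠ (0, 0)}) :
    precNorm (eN n) = -1 + (plen n : ℝ) / 2 := by
  have hzero : eN n (Sum.inl 0) = 0 := Finsupp.single_eq_of_ne Sum.inl_ne_inr
  simp [precNorm, slen_eN, polyPart_eN, hzero]

theorem slen_le_precNorm (β : MIdx) : (slen β : ℝ) ≤ precNorm β := by
  rw [precNorm, add_assoc]
  exact le_add_of_nonneg_right (by positivity)

theorem Populated.neg_half_le_precNorm {β : MIdx} (hβ : Populated β) :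
    -(1 / 2) ≤ precNorm β := by
  rcases hβ with ⟨n, rfl⟩ | hβ
  · have hn : (1 : ℝ) ≤ plen n := mod_cast plen_pos n.2
    rw [precNorm_eN]
    linarith
  · have hβ' : (0 : ℝ) ≤ slen β := mod_cast hβ
    linarith [slen_le_precNorm β]

theorem precNorm_add_half_le_precNorm_sum {ι : Type*} {s : Finset ι} {f : ι → MIdx}
    (hf : ∀ j ∈ s, Populated (f j)) {i : ι} (hi : i ∈ s) :
    precNorm (f i) + 1 / 2 ≤ precNorm (∑ j ∈ s, f j) + (s.card : ℝ) / 2 := by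
  have hnonneg : ∀ j ∈ s, 0 ≤ precNorm (f j) + 1 / 2 := fun j hj => by
    linarith [(hf j hj).neg_half_le_precNorm]
  calc precNorm (f i) + 1 / 2
      ≤ ∑ j ∈ s, (precNorm (f j) + 1 / 2) :=
        Finset.single_le_sum (f := fun j => precNorm (f j) + 1 / 2) hnonneg hi
    _ = precNorm (∑ j ∈ s, f j) + (s.card : ℝ) / 2 := by
        rw [Finset.sum_add_distrib, Finset.sum_const, nsmul_eq_mul, precNorm_sum, mul_one_div]

/-- The matrix `A` is graded of degree `d` for the scaled length: its entry `A_β^γ` vanishes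
unless `[β] = [γ] + d`. -/
def RaisesSlen (A : MIdx → MIdx → ℕ) (d : ℤ) : Prop :=
  ∀ ⦃β γ⦄, A β γ ≠ 0 → slen β = slen γ + d

theorem raisesSlen_D0 : RaisesSlen D0 1 := by
  intro β γ h
  obtain ⟨k, hk⟩ : ∃ k : ℕ, γ + eK (k + 1) = β + eK k := by
    by_contra hk
    exact h (dif_neg hk)
  have hslen := congrArg slen hk
  simp only [slen_add, slen_eK] at hslen
  push_cast at hslen
  linarith

theorem raisesSlen_DMat (n : ℕ × ℕ) : RaisesSlen (DMat n) 1 := by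
  by_cases hn : n = (0, 0)
  · rw [DMat, dif_pos hn]
    exact raisesSlen_D0
  · rw [DMat, dif_neg hn]
    intro β γ h
    have hγ : γ = β + eN ⟨n, hn⟩ := of_not_not fun hγ => h (if_neg hγ)
    rw [hγ, slen_add, slen_eN, neg_add_cancel_right]

theorem raisesSlen_matId : RaisesSlen matId 0 := by
  intro β γ h
  have hγ : γ = β := of_not_not fun hγ => h (if_neg hγ)
  rw [hγ, add_zero]

theorem exists_ne_zero_of_matMul_ne_zero {A B : MIdx → MIdx → ℕ} {β γ : MIdx}
    (h : matMul A B β γ ≠ 0) : ∃ δ, A β δ ≠ 0 ∧ B δ γ ≠ 0 := by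
  by_contra! hAB
  exact h (finsum_eq_zero_of_forall_eq_zero fun δ => by
    rw [mul_eq_zero, or_iff_not_imp_left]
    exact hAB δ)

theorem RaisesSlen.matMul {A B : MIdx → MIdx → ℕ} {d e : ℤ} (hA : RaisesSlen A d)
    (hB : RaisesSlen B e) : RaisesSlen (matMul A B) (d + e) := by
  intro β γ h
  obtain ⟨δ, hβδ, hδγ⟩ := exists_ne_zero_of_matMul_ne_zero h
  rw [hA hβδ, hB hδγ, add_assoc, add_comm e]

theorem raisesSlen_matProd {l : List (MIdx → MIdx → ℕ)} {d : ℤ}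
    (hl : ∀ A ∈ l, RaisesSlen A d) : RaisesSlen (matProd l) (l.length • d) := by
  induction l with
  | nil =>
    rw [List.length_nil, zero_nsmul]
    exact raisesSlen_matId
  | cons A l ih =>
    rw [List.forall_mem_cons] at hl
    rw [List.length_cons, succ_nsmul']
    exact hl.1.matMul (ih hl.2)

theorem raisesSlen_matProd_map_DMat (l : List (ℕ × ℕ)) :
    RaisesSlen (matProd (l.map DMat)) l.length := by
  simpa using raisesSlen_matProd (d := 1) (List.forall_mem_map.2 fun n _ => raisesSlen_DMat n)

theorem statement12_general {k : ℕ} {βs : Fin (k + 1) → MIdx}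
    (hpop : ∀ i : Fin k, Populated (βs i.castSucc)) {γ : MIdx} (hγ : 0 ≤ slen γ)
    {ns : Fin k → ℕ × ℕ}
    (h : matProd ((List.ofFn ns).map DMat) (βs (Fin.last k)) γ ≠ 0) (i : Fin k) :
    precNorm (βs i.castSucc) + (k + 1) / 2 ≤ precNorm (∑ j, βs j) := by
  have hslen : slen (βs (Fin.last k)) = slen γ + k := by
    simpa only [List.length_ofFn] using raisesSlen_matProd_map_DMat _ h
  have hlast : (k : ℝ) ≤ precNorm (βs (Fin.last k)) := by
    refine le_trans ?_ (slen_le_precNorm _)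
    exact_mod_cast (by linarith : (k : ℤ) ≤ slen (βs (Fin.last k)))
  have hinit := precNorm_add_half_le_precNorm_sum (fun j _ => hpop j) (Finset.mem_univ i)
  rw [Finset.card_univ, Fintype.card_fin] at hinit
  rw [Fin.sum_univ_castSucc, precNorm_add]
  linarith

/-- Lemma 5.1 (triangular dependencies): with `0 < α ≤ 1`, `k ≥ 1`, populated
`β₁, …, β_{k+1}`, a populated and not purely polynomial `γ`, and `n₁, …, n_k ∈ ℕ²`
with `|nᵢ| < |βᵢ|`, set `β = β₁ + ⋯ + β_{k+1}`; if
`(D^{(n₁)} ⋯ D^{(n_k)})_{β_{k+1}}^γ ≠ 0` then `βᵢ ≺ β` for `i = 1, …, k`. -/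
theorem statement12 (α : ℝ) (hα0 : 0 < α) (hα1 : α ≤ 1) (k : ℕ) (hk : 1 ≤ k)
    (βs : Fin (k + 1) → MIdx) (hpop : ∀ i, Populated (βs i))
    (γ : MIdx) (hγpop : Populated γ) (hγnpp : ¬ PurelyPoly γ)
    (ns : Fin k → ℕ × ℕ)
    (hn : ∀ i : Fin k, (plen (ns i) : ℝ) < homog α (βs i.castSucc))
    (h : matProd ((List.ofFn ns).map DMat) (βs (Fin.last k)) γ ≠ 0) :
    ∀ i : Fin k, precNorm (βs i.castSucc) < precNorm (∑ j, βs j) :=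
  fun i => (lt_add_of_pos_right _ (by positivity)).trans_le <|
    statement12_general (fun j => hpop j.castSucc) (hγpop.resolve_left hγnpp) h i
end
end

section
/- Let R = ℝ[[z_k, z_n]] be the algebra of formal power series in the variables indexed by I, i.e. functions from multi-indices to ℝ with the Cauchy product (π·π')_β = Σ_{β₁+β₂=β} π_{β₁}·π'_{β₂}, and let D^(0) act on R componentwise via its matrix, (D^(0)π)_β := Σ_γ (D^(0))_β^γ π_γ (a finite sum). Let T* ⊂ R be the subspace of π with π_β = 0 for every non-populated β, and T̃* ⊂ R the subspace of π with π_β = 0 for every β with [β] < 0. Then for every k ≥ 1, every π ∈ T* and every c ∈ T̃*, the product π^k · (D^(0))^k c lies in T̃*. -/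
open Finsupp

noncomputable section

/-- The Cauchy product on `R = ℝ[[z_k, z_n]]`, viewed as functions from
multi-indices to `ℝ`: `(π·π')_β = Σ_{β₁+β₂=β} π_{β₁} π'_{β₂}`. -/
def cauchyMul (π π' : MIdx → ℝ) : MIdx → ℝ :=
  fun β => ∑ p ∈ Finset.HasAntidiagonal.antidiagonal β, π p.1 * π' p.2

open Classical in
/-- Cauchy powers `π^k`. -/
def cauchyPow (π : MIdx → ℝ) : ℕ → MIdx → ℝ
  | 0 => fun β => if β = 0 then 1 else 0
  | k + 1 => cauchyMul π (cauchyPow π k)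

/-- `D^(0)` acting componentwise on `R` via its matrix:
`(D^(0) π)_β = Σ_γ (D^(0))_β^γ π_γ` (a finite sum). -/
def D0op (π : MIdx → ℝ) : MIdx → ℝ :=
  fun β => ∑ᶠ γ : MIdx, (D0 β γ : ℝ) * π γ

/-!
Since `[·]` is additive, the lowest scaled lengths of two series add up under the Cauchy product.
Populated multi-indices have `[β] ≥ -1`, so each factor `π ∈ T*` lowers the scaled length by at
most one, and each application of `D^(0)`, which replaces some `z_k` by `z_{k+1}`, makes up for it
by raising the scaled length by exactly one.
-/

theorem slen_zero : slen 0 = 0 :=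
  Finsupp.sum_zero_index

theorem slen_eq_add_one_of_D0_ne_zero {β γ : MIdx} (h : D0 β γ ≠ 0) :
    slen β = slen γ + 1 := by
  have hshift : ∃ k : ℕ, γ + eK (k + 1) = β + eK k := by
    by_contra hnone
    exact h (dif_neg hnone)
  obtain ⟨k, hk⟩ := hshift
  have hslen : slen γ + (k + 1 : ℕ) = slen β + k := by
    simpa only [slen_add, slen_eK] using congrArg slen hk
  lia

/-- The series `f` has no component of scaled length less than `a`. These conditions filter `R`
by `a : ℤ`, and `T̃*` is the step `a = 0` of the filtration. -/
def VanishesBelow (a : ℤ) (f : MIdx → ℝ) : Prop :=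
  ∀ β : MIdx, slen β < a → f β = 0

namespace VanishesBelow

variable {a b : ℤ} {f g : MIdx → ℝ}

theorem of_populated (hf : ∀ β : MIdx, ¬ Populated β → f β = 0) : VanishesBelow (-1) f :=
  fun β hβ => hf β fun hpop => hβ.not_ge hpop.neg_one_le_slen

protected theorem cauchyMul (hf : VanishesBelow a f) (hg : VanishesBelow b g) :
    VanishesBelow (a + b) (cauchyMul f g) := by
  intro β hβ
  refine Finset.sum_eq_zero fun p hp => ?_
  have hslen : slen p.1 + slen p.2 = slen β := by
    rw [← slen_add, Finset.HasAntidiagonal.mem_antidiagonal.mp hp]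
  have hlow : slen p.1 < a ∨ slen p.2 < b := by lia
  rcases hlow with hleft | hright
  · rw [hf p.1 hleft, zero_mul]
  · rw [hg p.2 hright, mul_zero]

protected theorem cauchyPow (hf : VanishesBelow a f) (k : ℕ) :
    VanishesBelow (k * a) (cauchyPow f k) := by
  induction k with
  | zero =>
    intro β hβ
    have hne : β ≠ 0 := by
      rintro rfl
      simp [slen_zero] at hβ
    exact if_neg hne
  | succ k ih =>
    have hexp : ((k + 1 : ℕ) : ℤ) * a = a + k * a := by push_cast; ring
    rw [hexp]
    exact hf.cauchyMul ih

protected theorem D0op (hf : VanishesBelow a f) : VanishesBelow (a + 1) (D0op f) := by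
  intro β hβ
  refine finsum_eq_zero_of_forall_eq_zero fun γ => ?_
  by_cases hentry : D0 β γ = 0
  · rw [hentry, Nat.cast_zero, zero_mul]
  · have hslen := slen_eq_add_one_of_D0_ne_zero hentry
    rw [hf γ (by lia), mul_zero]

theorem iterate_D0op (hf : VanishesBelow a f) (k : ℕ) :
    VanishesBelow (a + k) (D0op^[k] f) := by
  induction k with
  | zero => simpa using hf
  | succ k ih =>
    rw [Function.iterate_succ_apply', Nat.cast_succ, ← add_assoc]
    exact ih.D0op

end VanishesBelow

theorem statement16_general (k : ℕ) {a : ℤ} {π c : MIdx → ℝ}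
    (hπ : VanishesBelow (-1) π) (hc : VanishesBelow a c) :
    VanishesBelow a (cauchyMul (cauchyPow π k) (D0op^[k] c)) := by
  have hprod := (hπ.cauchyPow k).cauchyMul (hc.iterate_D0op k)
  rwa [show (k : ℤ) * -1 + (a + k) = a by ring] at hprod

/-- If `π ∈ T*` (vanishing on non-populated components) and `c ∈ T̃*` (vanishing
on components with `[β] < 0`), then for every `k ≥ 1` the product
`π^k · (D^(0))^k c` lies in `T̃*`. -/
theorem statement16 (k : ℕ) (hk : 1 ≤ k) (π c : MIdx → ℝ)
    (hπ : ∀ β : MIdx, ¬ Populated β → π β = 0)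
    (hc : ∀ β : MIdx, slen β < 0 → c β = 0) :
    ∀ β : MIdx, slen β < 0 → cauchyMul (cauchyPow π k) (D0op^[k] c) β = 0 :=
  statement16_general k (.of_populated hπ) hc
end
end
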